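/- Let N be an even positive integer and p an integer with 2 ≤ p ≤ N/2; assume u^p[2n]² + v^p[2n]² > 0 for every n. Define Ψ_{±,λ} = ψ_{[1],λ}^p ± i·C(ψ_{[1],λ}^p), and the 2D quasi-analytic wavelet packets Ψ_{++,j,l}[k,n] = Ψ_{+,j}[k]·Ψ_{+,l}[n] and Ψ_{+−,j,l}[k,n] = Ψ_{+,j}[k]·Ψ_{−,l}[n] for j,l ∈ {0,1}. For X ∈ Π[N,N] define X_+ = Σ_{j,l∈{0,1}} Σ_{a,b=0}^{N/2−1} ⟨X, Ψ_{++,j,l}[·−2a, ·−2b]⟩·Ψ_{++,j,l}[·−2a, ·−2b] and X_− analogously with Ψ_{+−,j,l}. Then X_+ = 4·(X + i·H^h(X) + i·H^v(X) − H^h(H^v(X))) and X_− = 4·(X − i·H^h(X) + i·H^v(X) + H^h(H^v(X))); consequently (X_+ + X_−)/8 = X + i·H^v(X), and if X is real-valued then X = Re((X_+ + X_−)/8). -/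

import Mathlib

open MeasureTheory

namespace WP

/-- The root of unity ω = e^{2πi/N}. -/
noncomputable def ww (N : ℕ) : ℂ := Complex.exp (2 * Real.pi * Complex.I / N)

/-- DFT of a signal `x ∈ Π[N]`: x̂[n] = Σ_{k=0}^{N−1} ω^{−kn} x[k]. -/
noncomputable def dft (N : ℕ) (x : ℤ → ℂ) (n : ℤ) : ℂ :=
  ∑ k ∈ Finset.range N, ww N ^ (-((k : ℤ) * n)) * x k

/-- Inner product on `Π[N]`. -/
noncomputable def inner1 (N : ℕ) (x y : ℤ → ℂ) : ℂ :=
  ∑ k ∈ Finset.range N, x k * (starRingEnd ℂ) (y k)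

/-- The discrete periodic Hilbert transform, defined via the DFT:
    Ĥ(x)[n] = −i·x̂[n] for 0<n<N/2, i·x̂[n] for N/2<n<N, 0 at n=0 and n=N/2. -/
noncomputable def hilbertT (N : ℕ) (x : ℤ → ℂ) (k : ℤ) : ℂ :=
  (N : ℂ)⁻¹ * ∑ n ∈ Finset.range N,
    (if 0 < n ∧ n < N / 2 then -Complex.I else if N / 2 < n ∧ n < N then Complex.I else 0) *
      dft N x n * ww N ^ ((k * (n : ℤ)))

/-- The complementary-WP operator `C`, defined via the DFT:
    Ĉ(x)[n] = −i·x̂[n] for 0<n<N/2, i·x̂[n] for N/2<n<N, x̂[0] at 0, x̂[N/2] at N/2. -/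
noncomputable def cwpT (N : ℕ) (x : ℤ → ℂ) (k : ℤ) : ℂ :=
  (N : ℂ)⁻¹ * ∑ n ∈ Finset.range N,
    (if n = 0 ∨ n = N / 2 then 1 else if n < N / 2 then -Complex.I else Complex.I) *
      dft N x n * ww N ^ ((k * (n : ℤ)))

/-- The order-p B-spline b^p(t). -/
noncomputable def bspline (p : ℕ) (t : ℝ) : ℝ :=
  (1 / (Nat.factorial (p - 1) : ℝ)) *
    ∑ k ∈ Finset.range (p + 1),
      (-1 : ℝ) ^ k * (p.choose k : ℝ) * max (t + (p : ℝ) / 2 - (k : ℝ)) 0 ^ (p - 1)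

/-- u^p[n] = Σ_{k=−N/2}^{N/2−1} ω^{−kn} b^p(k). -/
noncomputable def uSeq (N p : ℕ) (n : ℤ) : ℂ :=
  ∑ k ∈ Finset.range N,
    ww N ^ (-(((k : ℤ) - (N : ℤ) / 2) * n)) * (bspline p ((k : ℝ) - (N : ℝ) / 2) : ℂ)

/-- v^p[n] = e^{−πin/N} Σ_{k=−N/2}^{N/2−1} ω^{−kn} b^p(k+1/2). -/
noncomputable def vSeq (N p : ℕ) (n : ℤ) : ℂ :=
  Complex.exp (-Real.pi * Complex.I * n / N) *
    ∑ k ∈ Finset.range N,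
      ww N ^ (-(((k : ℤ) - (N : ℤ) / 2) * n)) *
        (bspline p ((k : ℝ) - (N : ℝ) / 2 + 1 / 2) : ℂ)

/-- The span-two discrete-time B-spline b_{[1]}^p ∈ Π[N]:
    the N-periodic signal with b_{[1]}^p[k] = b^p(k/2)/2 for −N/2 ≤ k ≤ N/2−1. -/
noncomputable def bs1 (N p : ℕ) (k : ℤ) : ℂ :=
  ((bspline p ((((k + (N : ℤ) / 2) % (N : ℤ) - (N : ℤ) / 2 : ℤ) : ℝ) / 2) : ℝ) : ℂ) / 2

/-- Its DFT b̂_{[1]}^p[n] = Σ_{k=−N/2}^{N/2−1} ω^{−kn} b_{[1]}^p[k]. -/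
noncomputable def bhat1 (N p : ℕ) (n : ℤ) : ℂ :=
  ∑ k ∈ Finset.range N,
    ww N ^ (-(((k : ℤ) - (N : ℤ) / 2) * n)) * bs1 N p ((k : ℤ) - (N : ℤ) / 2)

/-- Υ^p[n] = (u^p[2n]² + v^p[2n]²)/4. -/
noncomputable def upsilon (N p : ℕ) (n : ℤ) : ℂ :=
  (uSeq N p (2 * n) ^ 2 + vSeq N p (2 * n) ^ 2) / 4

/-- β[n] = b̂_{[1]}^p[n] / √(Υ^p[n]). -/
noncomputable def betaS (N p : ℕ) (n : ℤ) : ℂ := bhat1 N p n / upsilon N p n ^ ((1 : ℂ) / 2)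

/-- α[n] = ω^n · β[n+N/2]. -/
noncomputable def alphaS (N p : ℕ) (n : ℤ) : ℂ := ww N ^ n * betaS N p (n + (N : ℤ) / 2)

/-- The first-level wavelet packets ψ_{[1],λ}^p, λ = 0,1, defined via their DFTs
    ψ̂_{[1],0}^p[n] = β[n] and ψ̂_{[1],1}^p[n] = α[n]. -/
noncomputable def psi1 (N p lam : ℕ) (k : ℤ) : ℂ :=
  (N : ℂ)⁻¹ * ∑ n ∈ Finset.range N,
    (if lam = 0 then betaS N p n else alphaS N p n) * ww N ^ ((k * (n : ℤ)))


open scoped ComplexOrder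

/-- Inner product on Π[N,N]. -/
noncomputable def inner2 (N : ℕ) (X Y : ℤ → ℤ → ℂ) : ℂ :=
  ∑ k ∈ Finset.range N, ∑ n ∈ Finset.range N, X k n * (starRingEnd ℂ) (Y k n)

/-- Hilbert transform applied in the first (column) variable of a 2D signal. -/
noncomputable def Hv (N : ℕ) (X : ℤ → ℤ → ℂ) (k n : ℤ) : ℂ := hilbertT N (fun j => X j n) k

/-- Hilbert transform applied in the second (row) variable of a 2D signal. -/
noncomputable def Hh (N : ℕ) (X : ℤ → ℤ → ℂ) (k n : ℤ) : ℂ := hilbertT N (X k) n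

/-- First-level quasi-analytic wavelet packets Ψ_{±,λ} = ψ_{[1],λ}^p ± i·C(ψ_{[1],λ}^p). -/
noncomputable def qwpP (N p lam : ℕ) (k : ℤ) : ℂ :=
  psi1 N p lam k + Complex.I * cwpT N (psi1 N p lam) k

noncomputable def qwpM (N p lam : ℕ) (k : ℤ) : ℂ :=
  psi1 N p lam k - Complex.I * cwpT N (psi1 N p lam) k

/-- X_+ : frame expansion of X with the 2D qWPs Ψ_{++,j,l}[k,n] = Ψ_{+,j}[k]·Ψ_{+,l}[n]. -/
noncomputable def XPlus (N p : ℕ) (X : ℤ → ℤ → ℂ) (k n : ℤ) : ℂ :=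
  ∑ j ∈ Finset.range 2, ∑ l ∈ Finset.range 2,
    ∑ a ∈ Finset.range (N / 2), ∑ b ∈ Finset.range (N / 2),
      inner2 N X (fun k' n' => qwpP N p j (k' - 2 * (a : ℤ)) * qwpP N p l (n' - 2 * (b : ℤ))) *
        (qwpP N p j (k - 2 * (a : ℤ)) * qwpP N p l (n - 2 * (b : ℤ)))

/-- X_− : frame expansion of X with the 2D qWPs Ψ_{+−,j,l}[k,n] = Ψ_{+,j}[k]·Ψ_{−,l}[n]. -/
noncomputable def XMinus (N p : ℕ) (X : ℤ → ℤ → ℂ) (k n : ℤ) : ℂ :=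
  ∑ j ∈ Finset.range 2, ∑ l ∈ Finset.range 2,
    ∑ a ∈ Finset.range (N / 2), ∑ b ∈ Finset.range (N / 2),
      inner2 N X (fun k' n' => qwpP N p j (k' - 2 * (a : ℤ)) * qwpM N p l (n' - 2 * (b : ℤ))) *
        (qwpP N p j (k - 2 * (a : ℤ)) * qwpM N p l (n - 2 * (b : ℤ)))

theorem ww_ne_zero (N : ℕ) : ww N ≠ 0 := Complex.exp_ne_zero _

theorem isPrimitiveRoot_ww {N : ℕ} (hN : 0 < N) : IsPrimitiveRoot (ww N) N :=
  Complex.isPrimitiveRoot_exp N hN.ne'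

theorem conj_ww_zpow (N : ℕ) (z : ℤ) : (starRingEnd ℂ) (ww N ^ z) = ww N ^ (-z) := by
  rw [map_zpow₀, zpow_neg, ← inv_zpow, ww, ← Complex.exp_conj, ← Complex.exp_neg]
  simp [neg_div, Complex.conj_ofNat]

theorem ww_zpow_eq_one {N : ℕ} (hN : 0 < N) {z : ℤ} (hz : (N : ℤ) ∣ z) : ww N ^ z = 1 :=
  ((isPrimitiveRoot_ww hN).zpow_eq_one_iff_dvd z).2 hz

theorem ww_zpow_half {M : ℕ} (hM : 0 < M) : ww (2 * M) ^ (M : ℤ) = -1 := by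
  have hM' : (M : ℂ) ≠ 0 := by exact_mod_cast hM.ne'
  rw [ww, ← Complex.exp_int_mul, ← Complex.exp_pi_mul_I]
  congr 1
  push_cast
  field_simp

/-- Orthogonality of the characters `a ↦ ζ ^ (a z)` for a primitive root of unity `ζ`. -/
theorem sum_primitiveRoot_zpow {ζ : ℂ} {K : ℕ} (hζ : IsPrimitiveRoot ζ K) (z : ℤ) :
    ∑ a ∈ Finset.range K, ζ ^ ((a : ℤ) * z) = if (K : ℤ) ∣ z then (K : ℂ) else 0 := by
  have hpow : ∀ a : ℕ, ζ ^ ((a : ℤ) * z) = (ζ ^ z) ^ a := fun a ↦ by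
    rw [mul_comm, zpow_mul, zpow_natCast]
  simp only [hpow]
  split_ifs with h
  · simp [(hζ.zpow_eq_one_iff_dvd z).2 h]
  · have h1 : ζ ^ z ≠ 1 := fun h' ↦ h ((hζ.zpow_eq_one_iff_dvd z).1 h')
    have h2 : (ζ ^ z) ^ K = 1 := by
      rw [← hpow, mul_comm, zpow_mul, zpow_natCast, ← zpow_natCast, ← zpow_mul, mul_comm, zpow_mul,
        zpow_natCast, hζ.pow_eq_one, one_zpow]
    have h3 := mul_neg_geom_sum (ζ ^ z) K
    rw [h2, sub_self] at h3
    exact (mul_eq_zero.1 h3).resolve_left (sub_ne_zero.2 h1.symm)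

/-- The inverse discrete Fourier transform. -/
noncomputable def idft (N : ℕ) (f : ℕ → ℂ) (k : ℤ) : ℂ :=
  (N : ℂ)⁻¹ * ∑ n ∈ Finset.range N, f n * ww N ^ (k * (n : ℤ))

theorem idft_eq_sum (N : ℕ) (f : ℕ → ℂ) (k : ℤ) :
    idft N f k = ∑ n ∈ Finset.range N, (N : ℂ)⁻¹ * (f n * ww N ^ (k * (n : ℤ))) :=
  Finset.mul_sum _ _ _

theorem natCast_dvd_sub_iff {N m n : ℕ} (hm : m < N) (hn : n < N) :
    (N : ℤ) ∣ (m : ℤ) - n ↔ m = n := by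
  constructor
  · intro h
    have := Int.eq_zero_of_abs_lt_dvd h (by rw [abs_lt]; omega)
    omega
  · rintro rfl
    simp

theorem dft_idft {N : ℕ} (hN : 0 < N) (f : ℕ → ℂ) {n : ℕ} (hn : n < N) :
    dft N (idft N f) n = f n := by
  have hN' : (N : ℂ) ≠ 0 := by exact_mod_cast hN.ne'
  have hstep : ∀ m ∈ Finset.range N,
      ∑ k ∈ Finset.range N, ww N ^ (-((k : ℤ) * n)) * ((N : ℂ)⁻¹ * (f m * ww N ^ ((k : ℤ) * m)))
        = if n = m then f m else 0 := by
    intro m hm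
    have : ∀ k : ℕ, ww N ^ (-((k : ℤ) * n)) * ((N : ℂ)⁻¹ * (f m * ww N ^ ((k : ℤ) * m)))
        = (N : ℂ)⁻¹ * f m * ww N ^ ((k : ℤ) * ((m : ℤ) - n)) := fun k ↦ by
      rw [mul_sub, sub_eq_add_neg, zpow_add₀ (ww_ne_zero N)]
      ring
    simp only [this, ← Finset.mul_sum, sum_primitiveRoot_zpow (isPrimitiveRoot_ww hN),
      natCast_dvd_sub_iff (Finset.mem_range.1 hm) hn]
    simp only [eq_comm (a := m)]
    split_ifs
    · field_simp
    · simp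
  simp only [dft, idft, Finset.mul_sum]
  rw [Finset.sum_comm, Finset.sum_congr rfl hstep]
  simp [hn]

theorem periodic_mod {N : ℕ} {x : ℤ → ℂ} (hx : ∀ k, x (k + N) = x k) (k : ℤ) :
    x (k % N) = x k := by
  have h : Function.Periodic x (N : ℤ) := hx
  have := h.sub_zsmul_eq (x := k) (k / N)
  rw [← this, Int.emod_def, smul_eq_mul, mul_comm]

theorem idft_dft {N : ℕ} (hN : 0 < N) {x : ℤ → ℂ} (hx : ∀ k, x (k + N) = x k) (k : ℤ) :
    idft N (fun n ↦ dft N x n) k = x k := by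
  have hN' : (N : ℂ) ≠ 0 := by exact_mod_cast hN.ne'
  have hZ : (0 : ℤ) < N := by exact_mod_cast hN
  obtain ⟨r, hr⟩ := Int.eq_ofNat_of_zero_le (Int.emod_nonneg k hZ.ne')
  have hrN : r < N := by have := Int.emod_lt_of_pos k hZ; omega
  have hdvd : ∀ j < N, ((N : ℤ) ∣ k - j ↔ r = j) := by
    intro j hj
    rw [← natCast_dvd_sub_iff hrN hj, ← dvd_sub_right (a := (N : ℤ)) (b := k - (r : ℤ))]
    · rw [show k - (r : ℤ) - (k - j) = -((r : ℤ) - j) by ring, dvd_neg]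
    · rw [← hr]; exact Int.dvd_self_sub_emod
  have hstep : ∀ j ∈ Finset.range N,
      ∑ n ∈ Finset.range N, (N : ℂ)⁻¹ * (ww N ^ (-((j : ℤ) * n)) * x j * ww N ^ (k * (n : ℤ)))
        = if r = j then x j else 0 := by
    intro j hj
    have : ∀ n : ℕ, (N : ℂ)⁻¹ * (ww N ^ (-((j : ℤ) * n)) * x j * ww N ^ (k * (n : ℤ)))
        = (N : ℂ)⁻¹ * x j * ww N ^ ((n : ℤ) * (k - j)) := fun n ↦ by
      rw [mul_sub, sub_eq_add_neg, zpow_add₀ (ww_ne_zero N), mul_comm (n : ℤ) k,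
        mul_comm (n : ℤ) j]
      ring
    simp only [this, ← Finset.mul_sum, sum_primitiveRoot_zpow (isPrimitiveRoot_ww hN),
      hdvd j (Finset.mem_range.1 hj)]
    split_ifs
    · field_simp
    · simp
  simp only [dft, idft, Finset.mul_sum, Finset.sum_mul]
  rw [Finset.sum_comm, Finset.sum_congr rfl hstep]
  rw [← periodic_mod hx k, hr]
  simp [hrN]

theorem sum_mul_idft_sub (N : ℕ) (x : ℤ → ℂ) (f : ℕ → ℂ) (k : ℤ) :
    ∑ j ∈ Finset.range N, x j * idft N f (k - j) = idft N (fun n ↦ f n * dft N x n) k := by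
  simp only [dft, idft, Finset.mul_sum, Finset.sum_mul]
  rw [Finset.sum_comm]
  refine Finset.sum_congr rfl fun n _ ↦ Finset.sum_congr rfl fun j _ ↦ ?_
  rw [sub_mul, sub_eq_add_neg, zpow_add₀ (ww_ne_zero N)]
  ring

/-- The Fourier multiplier of the discrete periodic Hilbert transform. -/
noncomputable def hilbertMult (N n : ℕ) : ℂ :=
  if 0 < n ∧ n < N / 2 then -Complex.I else if N / 2 < n ∧ n < N then Complex.I else 0

/-- The Fourier multiplier of the complementary wavelet packet operator. -/
noncomputable def cwpMult (N n : ℕ) : ℂ :=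
  if n = 0 ∨ n = N / 2 then 1 else if n < N / 2 then -Complex.I else Complex.I

theorem hilbertT_eq_idft (N : ℕ) (x : ℤ → ℂ) (k : ℤ) :
    hilbertT N x k = idft N (fun n ↦ hilbertMult N n * dft N x n) k := rfl

theorem cwpT_eq_idft (N : ℕ) (x : ℤ → ℂ) (k : ℤ) :
    cwpT N x k = idft N (fun n ↦ cwpMult N n * dft N x n) k := rfl

theorem idft_congr {N : ℕ} {f g : ℕ → ℂ} (h : ∀ n < N, f n = g n) (k : ℤ) :
    idft N f k = idft N g k := by
  simp only [idft]
  congr 1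
  exact Finset.sum_congr rfl fun n hn ↦ by rw [h n (Finset.mem_range.1 hn)]

theorem idft_add_mul (N : ℕ) (f g : ℕ → ℂ) (c : ℂ) (k : ℤ) :
    idft N (fun n ↦ f n + c * g n) k = idft N f k + c * idft N g k := by
  simp only [idft, add_mul, Finset.sum_add_distrib, mul_add, Finset.mul_sum]
  congr 1
  exact Finset.sum_congr rfl fun n _ ↦ by ring

theorem idft_const_mul (N : ℕ) (f : ℕ → ℂ) (c : ℂ) (k : ℤ) :
    idft N (fun n ↦ c * f n) k = c * idft N f k := by
  simp only [idft, Finset.mul_sum]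
  exact Finset.sum_congr rfl fun n _ ↦ by ring

theorem dft_add_mul (N : ℕ) (x y : ℤ → ℂ) (c : ℂ) (n : ℤ) :
    dft N (fun k ↦ x k + c * y k) n = dft N x n + c * dft N y n := by
  simp only [dft, mul_add, Finset.sum_add_distrib, Finset.mul_sum]
  congr 1
  exact Finset.sum_congr rfl fun n _ ↦ by ring

theorem hilbertT_add_mul (N : ℕ) (x y : ℤ → ℂ) (c : ℂ) (k : ℤ) :
    hilbertT N (fun j ↦ x j + c * y j) k = hilbertT N x k + c * hilbertT N y k := by
  simp only [hilbertT_eq_idft, dft_add_mul, ← idft_add_mul]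
  exact idft_congr (fun n _ ↦ by ring) k

/-- The DFT of the wavelet packet `ψ_{[1],λ}`. -/
noncomputable def psiHat (N p lam n : ℕ) : ℂ :=
  if lam = 0 then betaS N p n else alphaS N p n

theorem psi1_eq_idft (N p lam : ℕ) : psi1 N p lam = idft N (psiHat N p lam) := rfl

/-- The quasi-analytic packet `ψ + c C(ψ)` as an inverse DFT. -/
theorem psi1_add_mul_cwpT {N : ℕ} (hN : 0 < N) (p lam : ℕ) (c : ℂ) (k : ℤ) :
    psi1 N p lam k + c * cwpT N (psi1 N p lam) k
      = idft N (fun n ↦ (1 + c * cwpMult N n) * psiHat N p lam n) k := by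
  rw [cwpT_eq_idft, psi1_eq_idft, ← idft_add_mul]
  refine idft_congr (fun n hn ↦ ?_) k
  rw [dft_idft hN _ hn]
  ring

theorem neg_one_pow_sub_eq_mul {p k : ℕ} (hk : k ≤ p) :
    (-1 : ℝ) ^ (p - k) = (-1) ^ p * (-1) ^ k := by
  obtain ⟨d, rfl⟩ := Nat.exists_eq_add_of_le hk
  rw [Nat.add_sub_cancel_left, pow_add, mul_right_comm, ← mul_pow]
  simp

/-- A polynomial of degree less than `p` has vanishing `p`-th finite difference. -/
theorem sum_alternating_choose_mul_sub_pow {p q : ℕ} (hq : q < p) (x : ℝ) :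
    ∑ k ∈ Finset.range (p + 1), (-1 : ℝ) ^ k * (p.choose k : ℝ) * (x - k) ^ q = 0 := by
  have h := fwdDiff_iter_eq_sum_shift (1 : ℝ) (fun r : ℝ ↦ r ^ q) p (-x)
  rw [fwdDiff_iter_pow_eq_zero_of_lt hq] at h
  have h2 : ∑ k ∈ Finset.range (p + 1),
      ((-1 : ℤ) ^ (p - k) * (p.choose k : ℤ)) • (-x + k • (1 : ℝ)) ^ q
      = (-1) ^ p * (-1) ^ q *
        ∑ k ∈ Finset.range (p + 1), (-1 : ℝ) ^ k * (p.choose k : ℝ) * (x - k) ^ q := by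
    rw [Finset.mul_sum]
    refine Finset.sum_congr rfl fun k hk ↦ ?_
    have hx : -x + k • (1 : ℝ) = -1 * (x - k) := by simp; ring
    rw [hx, mul_pow, zsmul_eq_mul]
    push_cast
    rw [neg_one_pow_sub_eq_mul (Nat.lt_succ_iff.1 (Finset.mem_range.1 hk))]
    ring
  rw [h2] at h
  simpa using h.symm

theorem max_zero_pow_eq {q : ℕ} (hq : q ≠ 0) (x : ℝ) :
    max x 0 ^ q = x ^ q - (-1) ^ q * max (-x) 0 ^ q := by
  rcases le_total 0 x with h | h
  · rw [max_eq_left h, max_eq_right (by linarith)]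
    simp [hq]
  · rw [max_eq_right h, max_eq_left (by linarith), ← mul_pow]
    simp [hq]

theorem bspline_neg {p : ℕ} (hp : 2 ≤ p) (t : ℝ) : bspline p (-t) = bspline p t := by
  have hq : p - 1 ≠ 0 := by omega
  unfold bspline
  congr 1
  have hpoly := sum_alternating_choose_mul_sub_pow (p := p) (q := p - 1) (by omega) (t + p / 2)
  have hsplit : ∑ k ∈ Finset.range (p + 1),
      (-1 : ℝ) ^ k * (p.choose k : ℝ) * max (t + (p : ℝ) / 2 - (k : ℝ)) 0 ^ (p - 1)
      = ∑ k ∈ Finset.range (p + 1), (-1) ^ p *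
        ((-1 : ℝ) ^ k * (p.choose k : ℝ) * max (-(t + (p : ℝ) / 2 - (k : ℝ))) 0 ^ (p - 1)) := by
    rw [← sub_eq_zero, ← Finset.sum_sub_distrib]
    refine Eq.trans (Finset.sum_congr rfl fun k _ ↦ ?_) hpoly
    rw [max_zero_pow_eq hq (t + (p : ℝ) / 2 - (k : ℝ))]
    have : (-1 : ℝ) ^ p = -(-1) ^ (p - 1) := by
      conv_lhs => rw [show p = (p - 1) + 1 by omega]
      ring
    rw [this]
    ring
  rw [hsplit, ← Finset.sum_range_reflect]
  refine Finset.sum_congr rfl fun k hk ↦ ?_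
  have hk' : k ≤ p := Nat.lt_succ_iff.1 (Finset.mem_range.1 hk)
  rw [Nat.add_sub_cancel, Nat.choose_symm hk', neg_one_pow_sub_eq_mul hk', Nat.cast_sub hk',
    show -t + (p : ℝ) / 2 - ((p : ℝ) - k) = -(t + (p : ℝ) / 2 - (k : ℝ)) by ring]
  ring

theorem bspline_eq_zero_of_le {p : ℕ} (hp : 2 ≤ p) {t : ℝ} (ht : t ≤ -(p / 2)) :
    bspline p t = 0 := by
  unfold bspline
  rw [Finset.sum_eq_zero, mul_zero]
  intro k _
  have hk : (0 : ℝ) ≤ k := Nat.cast_nonneg k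
  rw [max_eq_right (by linarith), zero_pow (by omega), mul_zero]

theorem bspline_eq_zero_of_le_abs {p : ℕ} (hp : 2 ≤ p) {t : ℝ} (ht : p / 2 ≤ |t|) :
    bspline p t = 0 := by
  rcases le_abs.1 ht with h | h
  · rw [← bspline_neg hp]
    exact bspline_eq_zero_of_le hp (by linarith)
  · exact bspline_eq_zero_of_le hp (by linarith)

theorem sum_range_sub_eq_sum_Ico (M : ℕ) (F : ℤ → ℂ) :
    ∑ k ∈ Finset.range (2 * M), F ((k : ℤ) - M) = ∑ k ∈ Finset.Ico (-(M : ℤ)) M, F k := by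
  refine Finset.sum_bij (fun (k : ℕ) _ ↦ (k : ℤ) - M) ?_ ?_ ?_ (fun _ _ ↦ rfl)
  · intro k hk
    simp only [Finset.mem_range, Finset.mem_Ico] at *
    omega
  · intro a _ b _ h
    omega
  · intro b hb
    simp only [Finset.mem_Ico] at hb
    exact ⟨(b + M).toNat, by simp; omega, by omega⟩

theorem sum_Ico_two_mul (M : ℕ) (F : ℤ → ℂ) :
    ∑ k ∈ Finset.Ico (-(M : ℤ)) M, (F (2 * k) + F (2 * k + 1))
      = ∑ k ∈ Finset.Ico (-(2 * M : ℤ)) (2 * M), F k := by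
  rw [← Finset.sum_fiberwise_of_maps_to (s := Finset.Ico (-(2 * M : ℤ)) (2 * M))
    (t := Finset.Ico (-(M : ℤ)) M) (g := fun k ↦ k / 2)]
  · refine Finset.sum_congr rfl fun k hk ↦ ?_
    rw [Finset.mem_Ico] at hk
    have : (Finset.Ico (-(2 * M : ℤ)) (2 * M)).filter (fun j ↦ j / 2 = k) = {2 * k, 2 * k + 1} := by
      ext j
      simp only [Finset.mem_filter, Finset.mem_Ico, Finset.mem_insert, Finset.mem_singleton]
      omega
    rw [this, Finset.sum_pair (by omega)]
  · intro k hk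
    simp only [Finset.mem_Ico] at *
    omega

/-- The samples `b^p(k/2)/2` over all integers, without periodization. -/
noncomputable def splineSample (p : ℕ) (k : ℤ) : ℂ := (bspline p ((k : ℝ) / 2) : ℂ) / 2

theorem splineSample_neg {p : ℕ} (hp : 2 ≤ p) (k : ℤ) :
    splineSample p (-k) = splineSample p k := by
  simp only [splineSample]
  push_cast
  rw [neg_div, bspline_neg hp]

theorem splineSample_eq_zero {p : ℕ} (hp : 2 ≤ p) {k : ℤ} (hk : (p : ℤ) ≤ |k|) :
    splineSample p k = 0 := by
  have hk' : (p : ℝ) ≤ |(k : ℝ)| := by exact_mod_cast hk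
  rw [splineSample, bspline_eq_zero_of_le_abs hp]
  · simp
  · rw [abs_div, abs_two]
    linarith

theorem conj_splineSample (p : ℕ) (k : ℤ) :
    (starRingEnd ℂ) (splineSample p k) = splineSample p k := by
  simp [splineSample, Complex.conj_ofNat]

theorem bhat1_eq_sum_Ico (M p : ℕ) (n : ℤ) :
    bhat1 (2 * M) p n
      = ∑ k ∈ Finset.Ico (-(M : ℤ)) M, ww (2 * M) ^ (-(k * n)) * splineSample p k := by
  rw [← sum_range_sub_eq_sum_Ico M fun k ↦ ww (2 * M) ^ (-(k * n)) * splineSample p k]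
  have hM : ((2 * M : ℕ) : ℤ) / 2 = M := by omega
  simp only [bhat1, hM]
  refine Finset.sum_congr rfl fun k hk ↦ ?_
  rw [Finset.mem_range] at hk
  simp only [bs1, hM, splineSample]
  rw [sub_add_cancel, Int.emod_eq_of_lt (by omega) (by omega)]

theorem uSeq_two_mul_eq (M p : ℕ) (n : ℤ) :
    uSeq (2 * M) p (2 * n) = ∑ k ∈ Finset.Ico (-(M : ℤ)) M,
      2 * (ww (2 * M) ^ (-((2 * k) * n)) * splineSample p (2 * k)) := by
  rw [← sum_range_sub_eq_sum_Ico M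
    fun k ↦ 2 * (ww (2 * M) ^ (-((2 * k) * n)) * splineSample p (2 * k))]
  have hM : ((2 * M : ℕ) : ℤ) / 2 = M := by omega
  simp only [uSeq, hM]
  refine Finset.sum_congr rfl fun k _ ↦ ?_
  rw [splineSample, show ((2 * ((k : ℤ) - M) : ℤ) : ℝ) / 2 = (k : ℝ) - ((2 * M : ℕ) : ℝ) / 2 by
    push_cast; ring, show ((k : ℤ) - M) * (2 * n) = 2 * ((k : ℤ) - M) * n by ring]
  ring

theorem vSeq_two_mul_eq (M p : ℕ) (n : ℤ) :
    vSeq (2 * M) p (2 * n) = ∑ k ∈ Finset.Ico (-(M : ℤ)) M,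
      2 * (ww (2 * M) ^ (-((2 * k + 1) * n)) * splineSample p (2 * k + 1)) := by
  rw [← sum_range_sub_eq_sum_Ico M
    fun k ↦ 2 * (ww (2 * M) ^ (-((2 * k + 1) * n)) * splineSample p (2 * k + 1))]
  have hM : ((2 * M : ℕ) : ℤ) / 2 = M := by omega
  have hexp : Complex.exp (-Real.pi * Complex.I * ((2 * n : ℤ) : ℂ) / ((2 * M : ℕ) : ℂ))
      = ww (2 * M) ^ (-n) := by
    rw [ww, ← Complex.exp_int_mul]
    congr 1
    push_cast
    ring
  simp only [vSeq, hM, hexp, Finset.mul_sum]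
  refine Finset.sum_congr rfl fun k _ ↦ ?_
  rw [splineSample, show ((2 * ((k : ℤ) - M) + 1 : ℤ) : ℝ) / 2
      = (k : ℝ) - ((2 * M : ℕ) : ℝ) / 2 + 1 / 2 by push_cast; ring,
    show -((2 * ((k : ℤ) - M) + 1) * n) = -n + -(((k : ℤ) - M) * (2 * n)) by ring,
    zpow_add₀ (ww_ne_zero _)]
  ring

/-- The two polyphase components of `b_{[1]}^p` have DFTs `u^p[2n]/2` and `v^p[2n]/2`. -/
theorem bhat1_eq_half_add {M p : ℕ} (hp : 2 ≤ p) (hpM : p ≤ M) (n : ℤ) :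
    bhat1 (2 * M) p n = (uSeq (2 * M) p (2 * n) + vSeq (2 * M) p (2 * n)) / 2 := by
  rw [bhat1_eq_sum_Ico, uSeq_two_mul_eq, vSeq_two_mul_eq, ← Finset.mul_sum, ← Finset.mul_sum,
    ← mul_add, ← Finset.sum_add_distrib,
    sum_Ico_two_mul M fun k ↦ ww (2 * M) ^ (-(k * n)) * splineSample p k,
    mul_div_cancel_left₀ _ two_ne_zero]
  refine Finset.sum_subset (fun k hk ↦ ?_) fun k _ hk ↦ ?_
  · simp only [Finset.mem_Ico] at *
    omega
  · rw [splineSample_eq_zero hp, mul_zero]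
    rw [Finset.mem_Ico] at hk
    rw [le_abs]
    omega

theorem uSeq_two_mul_add_half {M : ℕ} (hM : 0 < M) (p : ℕ) (n : ℤ) :
    uSeq (2 * M) p (2 * (n + M)) = uSeq (2 * M) p (2 * n) := by
  rw [uSeq_two_mul_eq, uSeq_two_mul_eq]
  refine Finset.sum_congr rfl fun k _ ↦ ?_
  rw [show -(2 * k * (n + M)) = -(2 * k * n) + ((2 * M : ℕ) : ℤ) * (-k) by push_cast; ring,
    zpow_add₀ (ww_ne_zero _), ww_zpow_eq_one (by omega) (Dvd.intro _ rfl), mul_one]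

theorem vSeq_two_mul_add_half {M : ℕ} (hM : 0 < M) (p : ℕ) (n : ℤ) :
    vSeq (2 * M) p (2 * (n + M)) = -vSeq (2 * M) p (2 * n) := by
  rw [vSeq_two_mul_eq, vSeq_two_mul_eq, ← Finset.sum_neg_distrib]
  refine Finset.sum_congr rfl fun k _ ↦ ?_
  rw [show -((2 * k + 1) * (n + M)) = -((2 * k + 1) * n) + (M + ((2 * M : ℕ) : ℤ) * (-k - 1)) by
      push_cast; ring,
    zpow_add₀ (ww_ne_zero _), zpow_add₀ (ww_ne_zero _) (M : ℤ),
    ww_zpow_eq_one (by omega) (Dvd.intro _ rfl), ww_zpow_half hM]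
  ring

theorem conj_bhat1 {M p : ℕ} (hp : 2 ≤ p) (hpM : p ≤ M) (n : ℤ) :
    (starRingEnd ℂ) (bhat1 (2 * M) p n) = bhat1 (2 * M) p n := by
  have hIoo : bhat1 (2 * M) p n
      = ∑ k ∈ Finset.Ioo (-(M : ℤ)) M, ww (2 * M) ^ (-(k * n)) * splineSample p k := by
    rw [bhat1_eq_sum_Ico]
    refine (Finset.sum_subset Finset.Ioo_subset_Ico_self fun k hk hk' ↦ ?_).symm
    rw [splineSample_eq_zero hp, mul_zero]
    rw [Finset.mem_Ico] at hk
    rw [Finset.mem_Ioo] at hk'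
    rw [le_abs]
    omega
  rw [hIoo, map_sum]
  refine Finset.sum_equiv (Equiv.neg ℤ) (fun k ↦ ?_) fun k _ ↦ ?_
  · simp only [Finset.mem_Ioo, Equiv.neg_apply]
    omega
  · rw [map_mul, conj_ww_zpow, conj_splineSample, Equiv.neg_apply, splineSample_neg hp, neg_mul]

theorem upsilon_add_half {M : ℕ} (hM : 0 < M) (p : ℕ) (n : ℤ) :
    upsilon (2 * M) p (n + M) = upsilon (2 * M) p n := by
  rw [upsilon, upsilon, uSeq_two_mul_add_half hM, vSeq_two_mul_add_half hM, neg_sq]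

theorem conj_cpow_half {z : ℂ} (hz : 0 ≤ z) :
    (starRingEnd ℂ) (z ^ ((1 : ℂ) / 2)) = z ^ ((1 : ℂ) / 2) := by
  obtain ⟨r, hr, rfl⟩ := RCLike.nonneg_iff_exists_ofReal.1 hz
  have h : ((r : ℂ)) ^ ((1 : ℂ) / 2) = ((r ^ ((1 : ℝ) / 2) : ℝ) : ℂ) := by
    rw [Complex.ofReal_cpow hr]
    norm_num
  have h' : (RCLike.ofReal r : ℂ) = (r : ℂ) := rfl
  rw [h', h, Complex.conj_ofReal]

theorem cpow_half_sq (z : ℂ) : (z ^ ((1 : ℂ) / 2)) ^ 2 = z := by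
  have := Complex.cpow_nat_inv_pow z two_ne_zero
  rwa [Nat.cast_two, ← one_div] at this

theorem betaS_add_period {M p : ℕ} (hp : 2 ≤ p) (hpM : p ≤ M) (n : ℤ) :
    betaS (2 * M) p (n + M + M) = betaS (2 * M) p n := by
  have hM : 0 < M := by omega
  rw [betaS, betaS, upsilon_add_half hM, upsilon_add_half hM, bhat1_eq_half_add hp hpM,
    bhat1_eq_half_add hp hpM, uSeq_two_mul_add_half hM, uSeq_two_mul_add_half hM,
    vSeq_two_mul_add_half hM, vSeq_two_mul_add_half hM, neg_neg]

theorem upsilon_pos {N p : ℕ} {n : ℤ}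
    (hpos : 0 < uSeq N p (2 * n) ^ 2 + vSeq N p (2 * n) ^ 2) : 0 < upsilon N p n :=
  div_pos hpos (by norm_num)

theorem conj_betaS {M p : ℕ} (hp : 2 ≤ p) (hpM : p ≤ M) {n : ℤ}
    (hpos : 0 < uSeq (2 * M) p (2 * n) ^ 2 + vSeq (2 * M) p (2 * n) ^ 2) :
    (starRingEnd ℂ) (betaS (2 * M) p n) = betaS (2 * M) p n := by
  rw [betaS, map_div₀, conj_bhat1 hp hpM, conj_cpow_half (upsilon_pos hpos).le]

theorem betaS_sq_add_betaS_sq {M p : ℕ} (hp : 2 ≤ p) (hpM : p ≤ M) {n : ℤ}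
    (hpos : 0 < uSeq (2 * M) p (2 * n) ^ 2 + vSeq (2 * M) p (2 * n) ^ 2) :
    betaS (2 * M) p n ^ 2 + betaS (2 * M) p (n + M) ^ 2 = 2 := by
  have hM : 0 < M := by omega
  rw [betaS, betaS, upsilon_add_half hM, div_pow, div_pow, cpow_half_sq, ← add_div,
    div_eq_iff (upsilon_pos hpos).ne', bhat1_eq_half_add hp hpM, bhat1_eq_half_add hp hpM,
    uSeq_two_mul_add_half hM, vSeq_two_mul_add_half hM, upsilon]
  ring

theorem sum_psiHat_mul_conj {M p : ℕ} (hp : 2 ≤ p) (hpM : p ≤ M)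
    (hpos : ∀ n : ℤ, 0 < uSeq (2 * M) p (2 * n) ^ 2 + vSeq (2 * M) p (2 * n) ^ 2) (m n : ℕ) :
    ∑ lam ∈ Finset.range 2,
        psiHat (2 * M) p lam m * (starRingEnd ℂ) (psiHat (2 * M) p lam n)
      = betaS (2 * M) p m * betaS (2 * M) p n
        + ww (2 * M) ^ ((m : ℤ) - n) * (betaS (2 * M) p (m + M) * betaS (2 * M) p (n + M)) := by
  have hM : ((2 * M : ℕ) : ℤ) / 2 = M := by omega
  simp only [Finset.sum_range_succ, Finset.sum_range_zero, zero_add, psiHat, if_true, one_ne_zero,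
    if_false, alphaS, hM, map_mul, conj_ww_zpow, conj_betaS hp hpM (hpos _)]
  rw [sub_eq_add_neg, zpow_add₀ (ww_ne_zero _)]
  ring

/-- Frequencies `m ≠ n` that alias under decimation by two cancel between `ψ₀` and `ψ₁`. -/
theorem sum_psiHat_mul_aliasing {M p : ℕ} (hp : 2 ≤ p) (hpM : p ≤ M)
    (hpos : ∀ n : ℤ, 0 < uSeq (2 * M) p (2 * n) ^ 2 + vSeq (2 * M) p (2 * n) ^ 2)
    {m n : ℕ} (hm : m < 2 * M) (hn : n < 2 * M) :
    (∑ lam ∈ Finset.range 2,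
        psiHat (2 * M) p lam m * (starRingEnd ℂ) (psiHat (2 * M) p lam n)) *
      (if (M : ℤ) ∣ (n : ℤ) - m then (M : ℂ) else 0) = if n = m then 2 * (M : ℂ) else 0 := by
  have hM : 0 < M := by omega
  rw [sum_psiHat_mul_conj hp hpM hpos]
  by_cases hmn : n = m
  · subst hmn
    have := betaS_sq_add_betaS_sq hp hpM (hpos n)
    simp only [sub_self, zpow_zero, dvd_zero, if_true]
    linear_combination (M : ℂ) * this
  · rw [if_neg hmn]
    split_ifs with hd
    · obtain ⟨c, hc⟩ := hd
      have hc1 : c < 2 := by nlinarith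
      have hc2 : -2 < c := by nlinarith
      have hc0 : c ≠ 0 := by rintro rfl; omega
      obtain rfl | rfl : c = 1 ∨ c = -1 := by omega
      · have hn' : (n : ℤ) = m + M := by omega
        rw [hn', betaS_add_period hp hpM, show (m : ℤ) - (m + M) = -M by ring, zpow_neg,
          ww_zpow_half hM]
        ring
      · have hm' : (m : ℤ) = n + M := by omega
        rw [hm', betaS_add_period hp hpM, show (n + M : ℤ) - n = M by ring, ww_zpow_half hM]
        ring
    · simp

theorem sum_comm_pairs {ι₁ ι₂ κ₁ κ₂ : Type*} (A : Finset ι₁) (B : Finset ι₂) (C : Finset κ₁)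
    (D : Finset κ₂) (F : ι₁ → ι₂ → κ₁ → κ₂ → ℂ) :
    ∑ a ∈ A, ∑ b ∈ B, ∑ c ∈ C, ∑ d ∈ D, F a b c d
      = ∑ c ∈ C, ∑ d ∈ D, ∑ a ∈ A, ∑ b ∈ B, F a b c d :=
  (Finset.sum_congr rfl fun _ _ ↦ Finset.sum_comm).trans <| Finset.sum_comm.trans <|
    Finset.sum_congr rfl fun _ _ ↦
      (Finset.sum_congr rfl fun _ _ ↦ Finset.sum_comm).trans Finset.sum_comm

/-- The kernel of the frame operator of the packets with DFTs `c ψ̂_λ` is a convolution with the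
signal whose DFT is `|c|²`. -/
theorem sum_idft_mul_conj {M p : ℕ} (hp : 2 ≤ p) (hpM : p ≤ M)
    (hpos : ∀ n : ℤ, 0 < uSeq (2 * M) p (2 * n) ^ 2 + vSeq (2 * M) p (2 * n) ^ 2)
    (c : ℕ → ℂ) (k j : ℤ) :
    ∑ lam ∈ Finset.range 2, ∑ a ∈ Finset.range M,
      idft (2 * M) (fun n ↦ c n * psiHat (2 * M) p lam n) (k - 2 * (a : ℤ)) *
        (starRingEnd ℂ)
          (idft (2 * M) (fun n ↦ c n * psiHat (2 * M) p lam n) (j - 2 * (a : ℤ)))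
      = idft (2 * M) (fun n ↦ c n * (starRingEnd ℂ) (c n)) (k - j) := by
  have hM : 0 < M := by omega
  have hM' : (M : ℂ) ≠ 0 := by exact_mod_cast hM.ne'
  have hprim : IsPrimitiveRoot (ww (2 * M) ^ 2) M :=
    (isPrimitiveRoot_ww (by omega)).pow (by omega) rfl
  simp only [idft_eq_sum, map_sum, Finset.sum_mul_sum]
  have hterm : ∀ lam a m n : ℕ,
      (((2 * M : ℕ) : ℂ)⁻¹ *
          (c m * psiHat (2 * M) p lam m * ww (2 * M) ^ ((k - 2 * (a : ℤ)) * (m : ℤ)))) *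
        (starRingEnd ℂ) (((2 * M : ℕ) : ℂ)⁻¹ *
          (c n * psiHat (2 * M) p lam n * ww (2 * M) ^ ((j - 2 * (a : ℤ)) * (n : ℤ))))
      = (((2 * M : ℕ) : ℂ)⁻¹ ^ 2 * (c m * (starRingEnd ℂ) (c n)) *
          ww (2 * M) ^ (k * (m : ℤ) - j * n)) *
        ((psiHat (2 * M) p lam m * (starRingEnd ℂ) (psiHat (2 * M) p lam n)) *
          (ww (2 * M) ^ 2) ^ ((a : ℤ) * ((n : ℤ) - m))) := by
    intro lam a m n
    have hw : (ww (2 * M) ^ 2) ^ ((a : ℤ) * ((n : ℤ) - m))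
        = ww (2 * M) ^ (2 * ((a : ℤ) * ((n : ℤ) - m))) := by
      rw [zpow_mul _ (2 : ℤ)]
      rfl
    have hexp : ww (2 * M) ^ ((k - 2 * (a : ℤ)) * (m : ℤ)) *
        ww (2 * M) ^ (-((j - 2 * (a : ℤ)) * (n : ℤ)))
        = ww (2 * M) ^ (k * (m : ℤ) - j * n) *
          ww (2 * M) ^ (2 * ((a : ℤ) * ((n : ℤ) - m))) := by
      rw [← zpow_add₀ (ww_ne_zero _), ← zpow_add₀ (ww_ne_zero _)]
      congr 1
      ring
    simp only [map_mul, map_inv₀, conj_ww_zpow, Complex.conj_natCast, hw]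
    linear_combination (((2 * M : ℕ) : ℂ)⁻¹ ^ 2 * (c m * (starRingEnd ℂ) (c n)) *
      (psiHat (2 * M) p lam m * (starRingEnd ℂ) (psiHat (2 * M) p lam n))) * hexp
  simp only [hterm]
  rw [sum_comm_pairs]
  calc _ = ∑ m ∈ Finset.range (2 * M), ∑ n ∈ Finset.range (2 * M),
        if n = m then ((2 * M : ℕ) : ℂ)⁻¹ * (c m * (starRingEnd ℂ) (c m) *
          ww (2 * M) ^ ((k - j) * (m : ℤ))) else 0 := by
        refine Finset.sum_congr rfl fun m hm ↦ Finset.sum_congr rfl fun n hn ↦ ?_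
        rw [Finset.mem_range] at hm hn
        simp only [← Finset.mul_sum, ← Finset.sum_mul, sum_primitiveRoot_zpow hprim]
        rw [sum_psiHat_mul_aliasing hp hpM hpos hm hn]
        split_ifs with h
        · subst h
          rw [sub_mul]
          push_cast
          field_simp
        · rw [mul_zero]
    _ = _ := Finset.sum_congr rfl fun m hm ↦ by simp [Finset.mem_range.1 hm]

/-- The 1D frame operator of the packets with DFTs `c ψ̂_λ`. -/
theorem sum_mul_frameKernel {M p : ℕ} (hp : 2 ≤ p) (hpM : p ≤ M)
    (hpos : ∀ n : ℤ, 0 < uSeq (2 * M) p (2 * n) ^ 2 + vSeq (2 * M) p (2 * n) ^ 2)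
    {c : ℕ → ℂ} {d : ℂ}
    (hc : ∀ n < 2 * M, c n * (starRingEnd ℂ) (c n) = 2 * (1 + d * hilbertMult (2 * M) n))
    {Ψ : ℕ → ℤ → ℂ}
    (hΨ : ∀ lam k, Ψ lam k = idft (2 * M) (fun n ↦ c n * psiHat (2 * M) p lam n) k)
    {x : ℤ → ℂ} (hx : ∀ k, x (k + (2 * M : ℕ)) = x k) (k : ℤ) :
    ∑ j ∈ Finset.range (2 * M), x j * ∑ lam ∈ Finset.range 2, ∑ a ∈ Finset.range M,
        Ψ lam (k - 2 * (a : ℤ)) * (starRingEnd ℂ) (Ψ lam (j - 2 * (a : ℤ)))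
      = 2 * (x k + d * hilbertT (2 * M) x k) := by
  simp only [hΨ, sum_idft_mul_conj hp hpM hpos, sum_mul_idft_sub]
  rw [← idft_dft (by omega) hx k, hilbertT_eq_idft, ← idft_add_mul, ← idft_const_mul]
  refine idft_congr (fun n hn ↦ ?_) k
  rw [hc n hn]
  ring

theorem one_add_I_mul_cwpMult_mul_conj {M n : ℕ} (hn : n < 2 * M) :
    (1 + Complex.I * cwpMult (2 * M) n) * (starRingEnd ℂ) (1 + Complex.I * cwpMult (2 * M) n)
      = 2 * (1 + Complex.I * hilbertMult (2 * M) n) := by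
  have hM : 2 * M / 2 = M := by omega
  simp only [cwpMult, hilbertMult, hM]
  split_ifs <;> first | omega | (simp <;> first | (norm_num; done) | linear_combination -Complex.I_mul_I)

theorem one_sub_I_mul_cwpMult_mul_conj {M n : ℕ} (hn : n < 2 * M) :
    (1 + -Complex.I * cwpMult (2 * M) n) * (starRingEnd ℂ) (1 + -Complex.I * cwpMult (2 * M) n)
      = 2 * (1 + -Complex.I * hilbertMult (2 * M) n) := by
  have hM : 2 * M / 2 = M := by omega
  simp only [cwpMult, hilbertMult, hM]
  split_ifs <;> first | omega | (simp <;> first | (norm_num; done) | linear_combination -Complex.I_mul_I)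

/-- A tensor-product frame expansion, written with the 1D frame kernels. -/
theorem tensor_frame_eq (N M : ℕ) (Ψ Φ : ℕ → ℤ → ℂ) (X : ℤ → ℤ → ℂ) (k n : ℤ) :
    ∑ j ∈ Finset.range 2, ∑ l ∈ Finset.range 2,
      ∑ a ∈ Finset.range M, ∑ b ∈ Finset.range M,
        inner2 N X (fun k' n' ↦ Ψ j (k' - 2 * (a : ℤ)) * Φ l (n' - 2 * (b : ℤ))) *
          (Ψ j (k - 2 * (a : ℤ)) * Φ l (n - 2 * (b : ℤ)))
      = ∑ n' ∈ Finset.range N,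
          (∑ k' ∈ Finset.range N, X k' n' * ∑ j ∈ Finset.range 2, ∑ a ∈ Finset.range M,
            Ψ j (k - 2 * (a : ℤ)) * (starRingEnd ℂ) (Ψ j (k' - 2 * (a : ℤ)))) *
          ∑ l ∈ Finset.range 2, ∑ b ∈ Finset.range M,
            Φ l (n - 2 * (b : ℤ)) * (starRingEnd ℂ) (Φ l (n' - 2 * (b : ℤ))) := by
  calc _ = ∑ j ∈ Finset.range 2, ∑ a ∈ Finset.range M,
        ∑ l ∈ Finset.range 2, ∑ b ∈ Finset.range M,
        ∑ k' ∈ Finset.range N, ∑ n' ∈ Finset.range N,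
          X k' n' * (Ψ j (k - 2 * (a : ℤ)) * (starRingEnd ℂ) (Ψ j (k' - 2 * (a : ℤ)))) *
            (Φ l (n - 2 * (b : ℤ)) * (starRingEnd ℂ) (Φ l (n' - 2 * (b : ℤ)))) := by
        refine Finset.sum_congr rfl fun j _ ↦ Finset.sum_comm.trans ?_
        refine Finset.sum_congr rfl fun a _ ↦ Finset.sum_congr rfl fun l _ ↦
          Finset.sum_congr rfl fun b _ ↦ ?_
        simp only [inner2, Finset.sum_mul, map_mul]
        exact Finset.sum_congr rfl fun _ _ ↦ Finset.sum_congr rfl fun _ _ ↦ by ring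
    _ = ∑ j ∈ Finset.range 2, ∑ a ∈ Finset.range M,
        ∑ k' ∈ Finset.range N, ∑ n' ∈ Finset.range N,
        ∑ l ∈ Finset.range 2, ∑ b ∈ Finset.range M,
          X k' n' * (Ψ j (k - 2 * (a : ℤ)) * (starRingEnd ℂ) (Ψ j (k' - 2 * (a : ℤ)))) *
            (Φ l (n - 2 * (b : ℤ)) * (starRingEnd ℂ) (Φ l (n' - 2 * (b : ℤ)))) :=
        Finset.sum_congr rfl fun _ _ ↦ Finset.sum_congr rfl fun _ _ ↦ sum_comm_pairs _ _ _ _ _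
    _ = _ := by
        rw [sum_comm_pairs, Finset.sum_comm]
        simp only [← Finset.mul_sum, ← Finset.sum_mul]

theorem qwpP_eq_idft {N : ℕ} (hN : 0 < N) (p lam : ℕ) (k : ℤ) :
    qwpP N p lam k
      = idft N (fun n ↦ (1 + Complex.I * cwpMult N n) * psiHat N p lam n) k :=
  psi1_add_mul_cwpT hN p lam Complex.I k

theorem qwpM_eq_idft {N : ℕ} (hN : 0 < N) (p lam : ℕ) (k : ℤ) :
    qwpM N p lam k
      = idft N (fun n ↦ (1 + -Complex.I * cwpMult N n) * psiHat N p lam n) k := by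
  rw [← psi1_add_mul_cwpT hN, qwpM, neg_mul, sub_eq_add_neg]

theorem hilbertT_const_mul (N : ℕ) (x : ℤ → ℂ) (c : ℂ) (k : ℤ) :
    hilbertT N (fun j ↦ c * x j) k = c * hilbertT N x k := by
  have h := hilbertT_add_mul N (fun _ ↦ 0) x c k
  have h0 : hilbertT N (fun _ ↦ 0) k = 0 := by simp [hilbertT, dft]
  simpa [h0] using h

/-- A tensor-product frame expansion whose 1D frame operators are `2 (1 + c H)` and
`2 (1 + d H)`. -/
theorem tensor_frame_expansion {N M : ℕ} {Ψ Φ : ℕ → ℤ → ℂ} {c d : ℂ}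
    (hΨ : ∀ x : ℤ → ℂ, (∀ k, x (k + N) = x k) → ∀ k,
      ∑ j ∈ Finset.range N, x j * ∑ lam ∈ Finset.range 2, ∑ a ∈ Finset.range M,
        Ψ lam (k - 2 * (a : ℤ)) * (starRingEnd ℂ) (Ψ lam (j - 2 * (a : ℤ)))
        = 2 * (x k + c * hilbertT N x k))
    (hΦ : ∀ x : ℤ → ℂ, (∀ k, x (k + N) = x k) → ∀ k,
      ∑ j ∈ Finset.range N, x j * ∑ lam ∈ Finset.range 2, ∑ a ∈ Finset.range M,
        Φ lam (k - 2 * (a : ℤ)) * (starRingEnd ℂ) (Φ lam (j - 2 * (a : ℤ)))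
        = 2 * (x k + d * hilbertT N x k))
    {X : ℤ → ℤ → ℂ} (hX1 : ∀ k n : ℤ, X (k + N) n = X k n)
    (hX2 : ∀ k n : ℤ, X k (n + N) = X k n) (k n : ℤ) :
    ∑ j ∈ Finset.range 2, ∑ l ∈ Finset.range 2,
      ∑ a ∈ Finset.range M, ∑ b ∈ Finset.range M,
        inner2 N X (fun k' n' ↦ Ψ j (k' - 2 * (a : ℤ)) * Φ l (n' - 2 * (b : ℤ))) *
          (Ψ j (k - 2 * (a : ℤ)) * Φ l (n - 2 * (b : ℤ)))
      = 4 * (X k n + d * Hh N X k n + c * Hv N X k n + c * d * Hh N (Hv N X) k n) := by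
  rw [tensor_frame_eq]
  have hcol : ∀ n' : ℤ, _ := fun n' ↦ hΨ (fun k' ↦ X k' n') (fun k' ↦ hX1 k' n') k
  simp only [hcol]
  rw [hΦ (fun n' ↦ 2 * (X k n' + c * hilbertT N (fun k' ↦ X k' n') k))
    (fun n' ↦ by simp only [hX2]), hilbertT_const_mul, hilbertT_add_mul]
  simp only [Hh, Hv]
  have heta : hilbertT N (fun n' ↦ X k n') n = hilbertT N (X k) n := rfl
  have heta' : hilbertT N (fun n' ↦ hilbertT N (fun k' ↦ X k' n') k) n
    = hilbertT N (Hv N X k) n := rfl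
  rw [heta, heta']
  ring

theorem conj_dft {N : ℕ} {x : ℤ → ℂ} (hx : ∀ k, (starRingEnd ℂ) (x k) = x k) (n : ℤ) :
    (starRingEnd ℂ) (dft N x n) = dft N x (-n) := by
  simp only [dft, map_sum, map_mul, conj_ww_zpow, hx, mul_neg]

theorem conj_hilbertT {M : ℕ} (hM : 0 < M) {x : ℤ → ℂ}
    (hx : ∀ k, (starRingEnd ℂ) (x k) = x k) (k : ℤ) :
    (starRingEnd ℂ) (hilbertT (2 * M) x k) = hilbertT (2 * M) x k := by
  have h0 : hilbertMult (2 * M) 0 = 0 := by simp [hilbertMult]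
  simp only [hilbertT_eq_idft, idft, map_mul, map_sum, map_inv₀, Complex.conj_natCast,
    conj_ww_zpow, conj_dft hx]
  congr 1
  obtain ⟨L, hL⟩ : ∃ L, 2 * M = L + 1 := ⟨2 * M - 1, by omega⟩
  conv_lhs => rw [hL, Finset.sum_range_succ']
  conv_rhs => rw [hL, Finset.sum_range_succ']
  rw [← hL, h0]
  simp only [map_zero, zero_mul, add_zero]
  rw [← Finset.sum_range_reflect]
  refine Finset.sum_congr rfl fun n hn ↦ ?_
  rw [Finset.mem_range] at hn
  have hcast : ((L - 1 - n + 1 : ℕ) : ℤ) = ((2 * M : ℕ) : ℤ) - ((n + 1 : ℕ) : ℤ) := by omega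
  have hshift : ∀ z : ℤ, ww (2 * M) ^ (z * ((2 * M : ℕ) : ℤ)) = 1 := fun z ↦
    ww_zpow_eq_one (by omega) (Dvd.intro_left _ rfl)
  have hmult : (starRingEnd ℂ) (hilbertMult (2 * M) (L - 1 - n + 1))
      = hilbertMult (2 * M) (n + 1) := by
    have hM2 : 2 * M / 2 = M := by omega
    simp only [hilbertMult, hM2]
    split_ifs <;> first | omega | simp
  rw [hmult, hcast]
  congr 1
  · congr 1
    simp only [dft]
    refine Finset.sum_congr rfl fun j _ ↦ ?_
    rw [show -((j : ℤ) * -(((2 * M : ℕ) : ℤ) - ((n + 1 : ℕ) : ℤ)))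
      = j * ((2 * M : ℕ) : ℤ) + -(j * ((n + 1 : ℕ) : ℤ)) by ring, zpow_add₀ (ww_ne_zero _), hshift,
      one_mul]
  · rw [show -(k * (((2 * M : ℕ) : ℤ) - ((n + 1 : ℕ) : ℤ)))
      = -k * ((2 * M : ℕ) : ℤ) + k * ((n + 1 : ℕ) : ℤ) by ring, zpow_add₀ (ww_ne_zero _), hshift,
      one_mul]

/-- X_+ = 4(X + iH^h(X) + iH^v(X) − H^h(H^v(X))),
    X_− = 4(X − iH^h(X) + iH^v(X) + H^h(H^v(X))); consequently
    (X_+ + X_−)/8 = X + iH^v(X), and for real-valued X, X = Re((X_+ + X_−)/8). -/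
theorem qwp_2d_frame_reconstruction (N p : ℕ) (hN : 0 < N) (hNe : Even N)
    (hp : 2 ≤ p) (hpN : p ≤ N / 2)
    (hpos : ∀ n : ℤ, 0 < uSeq N p (2 * n) ^ 2 + vSeq N p (2 * n) ^ 2)
    (X : ℤ → ℤ → ℂ)
    (hX1 : ∀ k n : ℤ, X (k + N) n = X k n) (hX2 : ∀ k n : ℤ, X k (n + N) = X k n) :
    (∀ k n : ℤ, XPlus N p X k n
      = 4 * (X k n + Complex.I * Hh N X k n + Complex.I * Hv N X k n - Hh N (Hv N X) k n)) ∧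
    (∀ k n : ℤ, XMinus N p X k n
      = 4 * (X k n - Complex.I * Hh N X k n + Complex.I * Hv N X k n + Hh N (Hv N X) k n)) ∧
    (∀ k n : ℤ, (XPlus N p X k n + XMinus N p X k n) / 8
      = X k n + Complex.I * Hv N X k n) ∧
    ((∀ k n : ℤ, (X k n).im = 0) → ∀ k n : ℤ,
      X k n = ((((XPlus N p X k n + XMinus N p X k n) / 8).re : ℝ) : ℂ)) := by
  obtain ⟨M, rfl⟩ := even_iff_two_dvd.1 hNe
  have hM : 2 * M / 2 = M := by omega
  have hpM : p ≤ M := by omega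
  have hI := Complex.I_mul_I
  have hP : ∀ x : ℤ → ℂ, (∀ k, x (k + (2 * M : ℕ)) = x k) → ∀ k, _ := fun x hx k ↦
    sum_mul_frameKernel hp hpM hpos (fun n hn ↦ one_add_I_mul_cwpMult_mul_conj hn)
      (qwpP_eq_idft hN p) hx k
  have hQ : ∀ x : ℤ → ℂ, (∀ k, x (k + (2 * M : ℕ)) = x k) → ∀ k, _ := fun x hx k ↦
    sum_mul_frameKernel hp hpM hpos (fun n hn ↦ one_sub_I_mul_cwpMult_mul_conj hn)
      (qwpM_eq_idft hN p) hx k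
  have hplus : ∀ k n : ℤ, XPlus (2 * M) p X k n = 4 * (X k n + Complex.I * Hh (2 * M) X k n
      + Complex.I * Hv (2 * M) X k n - Hh (2 * M) (Hv (2 * M) X) k n) := fun k n ↦ by
    have h := tensor_frame_expansion hP hP hX1 hX2 k n
    rw [XPlus, hM, h]
    linear_combination 4 * Hh (2 * M) (Hv (2 * M) X) k n * hI
  have hminus : ∀ k n : ℤ, XMinus (2 * M) p X k n = 4 * (X k n - Complex.I * Hh (2 * M) X k n
      + Complex.I * Hv (2 * M) X k n + Hh (2 * M) (Hv (2 * M) X) k n) := fun k n ↦ by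
    have h := tensor_frame_expansion hP hQ hX1 hX2 k n
    rw [XMinus, hM, h]
    linear_combination -4 * Hh (2 * M) (Hv (2 * M) X) k n * hI
  have hsum : ∀ k n : ℤ, (XPlus (2 * M) p X k n + XMinus (2 * M) p X k n) / 8
      = X k n + Complex.I * Hv (2 * M) X k n := fun k n ↦ by
    rw [hplus, hminus]
    ring
  refine ⟨hplus, hminus, hsum, fun hreal k n ↦ ?_⟩
  have hHv : (Hv (2 * M) X k n).im = 0 := Complex.conj_eq_iff_im.1 <|
    conj_hilbertT (by omega) (fun j ↦ Complex.conj_eq_iff_im.2 (hreal j n)) k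
  rw [hsum]
  apply Complex.ext <;> simp [hHv, hreal]

end WP
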